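/- Let ν ∈ (0,1] and k ∈ ℤ. Let ω : [0,∞)×[−1,1] → ℂ be continuous, continuously differentiable in t, twice continuously differentiable in y, and satisfy ∂_tω(t,y) = ν(∂_y²ω(t,y) − k²ω(t,y)) − iky·ω(t,y) for t > 0, with ω(t,−1) = ω(t,1) = 0 for all t ≥ 0. Then there exist constants C > 0 and c > 0, independent of ν, k, t and ω, such that ‖ω(t,·)‖_{L²} ≤ C·e^{−c·ν^{1/3}|k|^{2/3}·t − ν·t}·‖ω(0,·)‖_{L²} for all t ≥ 0; moreover, if |k| ≥ 1 then (νk²)^{1/3}·∫_0^∞ ‖ω(t,·)‖_{L²}² dt ≤ C·‖ω(0,·)‖_{L²}². -/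

import Mathlib

/-- The `L²` norm of a function on the interval `[-1,1]`. -/
noncomputable def nL2 (f : ℝ → ℂ) : ℝ :=
  (∫ y in Set.Icc (-1:ℝ) 1, ‖f y‖ ^ 2) ^ ((1:ℝ)/2)

open MeasureTheory Filter Topology Set

/-- Pointwise solution predicate. -/
def IsSol (ν : ℝ) (k : ℤ) (ω : ℝ → ℝ → ℂ) : Prop :=
  Continuous (fun p : ℝ × ℝ => ω p.1 p.2) ∧
  (∀ y : ℝ, ContDiff ℝ 1 (fun t => ω t y)) ∧
  (∀ t : ℝ, ContDiff ℝ 2 (fun y => ω t y)) ∧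
  (∀ t > (0:ℝ), ∀ y ∈ Set.Icc (-1:ℝ) 1,
    deriv (fun s => ω s y) t
      = (ν : ℂ) * (deriv (deriv (ω t)) y - (k:ℂ)^2 * ω t y)
        - Complex.I * (k:ℂ) * (y:ℂ) * ω t y) ∧
  (∀ t ≥ (0:ℝ), ω t (-1) = 0 ∧ ω t 1 = 0)

lemma c2_facts {f : ℝ → ℂ} (hf : ContDiff ℝ 2 f) :
    (∀ y, HasDerivAt f (deriv f y) y) ∧ (∀ y, HasDerivAt (deriv f) (deriv (deriv f) y) y) ∧
    Continuous f ∧ Continuous (deriv f) ∧ Continuous (deriv (deriv f)) := by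
  have h1 : ContDiff ℝ 1 (deriv f) := by
    have : ContDiff ℝ (1 + 1) f := by simpa [one_add_one_eq_two] using hf
    exact (contDiff_succ_iff_deriv.1 this).2.2
  exact ⟨fun y => ((hf.differentiable (by norm_num)) y).hasDerivAt,
    fun y => ((h1.differentiable (by norm_num)) y).hasDerivAt, hf.continuous, h1.continuous,
    h1.continuous_deriv le_rfl⟩

lemma c1_facts {f : ℝ → ℂ} (hf : ContDiff ℝ 1 f) :
    (∀ y, HasDerivAt f (deriv f y) y) ∧ Continuous (deriv f) :=
  ⟨fun y => ((hf.differentiable (by norm_num)) y).hasDerivAt, hf.continuous_deriv le_rfl⟩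

/-- second derivative test, necessary direction -/
lemma second_deriv_nonpos {φ φ' : ℝ → ℝ} {φ'' y : ℝ} (h1 : ∀ x, HasDerivAt φ (φ' x) x)
    (h2 : HasDerivAt φ' φ'' y) (hm : IsLocalMax φ y) : φ'' ≤ 0 := by
  by_contra hc
  push Not at hc
  have e1 : deriv φ = φ' := funext fun x => (h1 x).deriv
  have hmin : IsLocalMin φ y := by
    apply isLocalMin_of_deriv_deriv_pos
    · rw [e1, h2.deriv]; exact hc
    · exact hm.deriv_eq_zero
    · exact (h1 y).continuousAt
  have hconst : φ =ᶠ[𝓝 y] fun _ => φ y := by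
    filter_upwards [hm, hmin] with x hx hx'
    exact le_antisymm hx hx'
  have h3 := hconst.deriv
  have h4 := h3.deriv_eq
  rw [e1, h2.deriv] at h4
  simp at h4
  linarith

lemma left_deriv_nonneg {g : ℝ → ℝ} {g' a t : ℝ} (hat : a < t) (h : HasDerivAt g g' t)
    (hm : ∀ s ∈ Icc a t, g s ≤ g t) : 0 ≤ g' := by
  have h1 := (hasDerivWithinAt_iff_tendsto_slope' (s := Iio t) (by simp)).1 h.hasDerivWithinAt
  refine ge_of_tendsto h1 ?_
  filter_upwards [Ioo_mem_nhdsLT hat] with s hs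
  rw [slope_def_field]
  exact div_nonneg_of_nonpos (by linarith [hm s ⟨hs.1.le, hs.2.le⟩]) (by linarith [hs.2])

lemma max_principle {ν : ℝ} {k : ℤ} {W : ℝ → ℝ → ℂ} (hν : 0 < ν) (h : IsSol ν k W)
    {t0 t1 N : ℝ} (h0 : 0 ≤ t0) (h01 : t0 ≤ t1) (hN : ∀ y ∈ Icc (-1:ℝ) 1, ‖W t0 y‖ ≤ N) :
    ∀ y ∈ Icc (-1:ℝ) 1, ‖W t1 y‖ ≤ N := by
  obtain ⟨hc, ht, hy, hpde, hbc⟩ := h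
  have hN0 : 0 ≤ N := (norm_nonneg _).trans (hN 0 (by constructor <;> norm_num))
  intro y1 hy1
  by_contra hcon
  push Not at hcon
  have hlt : t0 < t1 := by
    rcases h01.lt_or_eq with h | h
    · exact h
    · subst h; exact absurd (hN y1 hy1) (not_le.2 hcon)
  have hsq : N ^ 2 < ‖W t1 y1‖ ^ 2 := by gcongr
  obtain ⟨ε, hε, hεlt⟩ : ∃ ε > 0, N ^ 2 < ‖W t1 y1‖ ^ 2 - ε * (t1 - t0) := by
    refine ⟨(‖W t1 y1‖ ^ 2 - N ^ 2) / (2 * (t1 - t0)), div_pos (by linarith) (by linarith), ?_⟩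
    have : (t1 - t0) ≠ 0 := by linarith
    have e : (‖W t1 y1‖ ^ 2 - N ^ 2) / (2 * (t1 - t0)) * (t1 - t0)
      = (‖W t1 y1‖ ^ 2 - N ^ 2) / 2 := by field_simp
    rw [e]; linarith
  have hK : IsCompact (Icc t0 t1 ×ˢ Icc (-1:ℝ) 1) := isCompact_Icc.prod isCompact_Icc
  obtain ⟨⟨ts, ys⟩, ⟨hts, hys⟩, hmax⟩ := hK.exists_isMaxOn
    (f := fun p : ℝ × ℝ => ‖W p.1 p.2‖ ^ 2 - ε * (p.1 - t0))
    ⟨(t1, y1), ⟨⟨h01, le_rfl⟩, hy1⟩⟩ (by fun_prop)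
  have hmax' : ∀ t ∈ Icc t0 t1, ∀ y ∈ Icc (-1:ℝ) 1,
      ‖W t y‖ ^ 2 - ε * (t - t0) ≤ ‖W ts ys‖ ^ 2 - ε * (ts - t0) :=
    fun t ht y hy => hmax (show (t, y) ∈ Icc t0 t1 ×ˢ Icc (-1:ℝ) 1 from ⟨ht, hy⟩)
  simp only at hts hys
  have hbig := hmax' t1 ⟨h01, le_rfl⟩ y1 hy1
  have hts0 : t0 < ts := by
    rcases hts.1.lt_or_eq with h | h
    · exact h
    · subst h
      have := hN ys hys
      have : ‖W t0 ys‖ ^ 2 ≤ N ^ 2 := by gcongr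
      linarith
  have hnn : 0 ≤ ε * (ts - t0) := mul_nonneg hε.le (by linarith)
  have hys1 : ys ∈ Ioo (-1:ℝ) 1 := by
    have hb := hbc ts (by linarith)
    refine ⟨lt_of_le_of_ne hys.1 ?_, lt_of_le_of_ne hys.2 ?_⟩
    · intro h; rw [← h, hb.1] at hbig; simp at hbig; nlinarith
    · intro h; rw [h, hb.2] at hbig; simp at hbig; nlinarith
  -- space direction
  obtain ⟨d1, d2, -, -, -⟩ := c2_facts (hy ts)
  set w := W ts ys with hw
  have hsp : inner ℝ w (deriv (deriv (W ts)) ys) ≤ 0 := by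
    have e1 : ∀ x, HasDerivAt (fun x => inner ℝ w (W ts x)) (inner ℝ w (deriv (W ts) x)) x := by
      intro x
      simpa using (hasDerivAt_const x w).inner ℝ (d1 x)
    have e2 : HasDerivAt (fun x => inner ℝ w (deriv (W ts) x))
        (inner ℝ w (deriv (deriv (W ts)) ys)) ys := by
      simpa using (hasDerivAt_const ys w).inner ℝ (d2 ys)
    refine second_deriv_nonpos e1 e2 ?_
    filter_upwards [Ioo_mem_nhds hys1.1 hys1.2] with x hx
    have hx1 := hmax' ts hts x ⟨hx.1.le, hx.2.le⟩
    have hx2 : ‖W ts x‖ ≤ ‖w‖ := by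
      refine abs_le_of_sq_le_sq' ?_ (norm_nonneg _) |>.2
      linarith
    calc inner ℝ w (W ts x) ≤ ‖w‖ * ‖W ts x‖ := real_inner_le_norm _ _
      _ ≤ ‖w‖ * ‖w‖ := by gcongr
      _ = inner ℝ w (W ts ys) := by rw [← hw, real_inner_self_eq_norm_mul_norm]
  -- time direction
  have htm : 0 ≤ 2 * inner ℝ w (deriv (fun s => W s ys) ts) - ε := by
    have e1 : HasDerivAt (fun s => ‖W s ys‖ ^ 2 - ε * (s - t0))
        (2 * inner ℝ w (deriv (fun s => W s ys) ts) - ε * 1) ts :=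
      ((c1_facts (ht ys)).1 ts).norm_sq.sub (((hasDerivAt_id ts).sub_const t0).const_mul ε)
    rw [mul_one] at e1
    refine left_deriv_nonneg hts0 e1 ?_
    intro s hs
    exact hmax' s ⟨hs.1, hs.2.trans hts.2⟩ ys hys
  rw [hpde ts (by linarith) ys hys, ← hw] at htm
  have e3 : inner ℝ w ((ν : ℂ) * (deriv (deriv (W ts)) ys - (k:ℂ)^2 * w)
        - Complex.I * (k:ℂ) * (ys:ℂ) * w)
      = ν * inner ℝ w (deriv (deriv (W ts)) ys) - ν * k^2 * ‖w‖^2 := by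
    rw [← real_inner_self_eq_norm_sq]
    have : (k : ℂ)^2 = ((k:ℝ)^2 : ℝ) := by push_cast; rfl
    have h' : (k : ℂ) = ((k:ℝ) : ℝ) := by push_cast; rfl
    rw [this, h']
    generalize (k:ℝ) = κ
    simp only [Complex.inner, Complex.mul_re, Complex.mul_im, Complex.sub_re, Complex.sub_im,
      Complex.conj_re, Complex.conj_im, Complex.ofReal_re, Complex.ofReal_im, Complex.I_re,
      Complex.I_im]
    ring
  rw [e3] at htm
  have h5 : ν * inner ℝ w (deriv (deriv (W ts)) ys) ≤ 0 :=
    mul_nonpos_of_nonneg_of_nonpos hν.le hsp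
  have h6 : 0 ≤ ν * (k:ℝ)^2 * ‖w‖^2 := by positivity
  linarith

lemma IsSol.shift_sub {ν : ℝ} {k : ℤ} {ω : ℝ → ℝ → ℂ} (h : IsSol ν k ω) {r : ℝ} (hr : 0 ≤ r) :
    IsSol ν k (fun t y => ω (t + r) y - ω t y) := by
  obtain ⟨hc, ht, hy, hpde, hbc⟩ := h
  refine ⟨?_, ?_, ?_, ?_, ?_⟩
  · have : Continuous (fun p : ℝ × ℝ => ω (p.1 + r) p.2) :=
      hc.comp (f := fun p : ℝ × ℝ => (p.1 + r, p.2)) (by fun_prop)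
    exact this.sub hc
  · intro y
    exact ((ht y).comp (contDiff_id.add contDiff_const)).sub (ht y)
  · intro t
    exact (hy _).sub (hy _)
  · intro t ht0 y hyI
    have e1 : deriv (fun s => ω (s + r) y - ω s y) t
        = deriv (fun s => ω s y) (t + r) - deriv (fun s => ω s y) t := by
      have a1 : HasDerivAt (fun s => ω (s + r) y) (deriv (fun s => ω s y) (t + r)) t := by
        have := (c1_facts (ht y)).1 (t + r)
        exact HasDerivAt.comp_add_const t r this
      exact (a1.sub ((c1_facts (ht y)).1 t)).deriv
    have e2 : deriv (fun y => ω (t + r) y - ω t y) = fun y => deriv (ω (t + r)) y - deriv (ω t) y := by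
      funext x
      exact (((c2_facts (hy (t + r))).1 x).sub ((c2_facts (hy t)).1 x)).deriv
    have e3 : deriv (deriv (fun y => ω (t + r) y - ω t y)) y
        = deriv (deriv (ω (t + r))) y - deriv (deriv (ω t)) y := by
      rw [e2]
      exact (((c2_facts (hy (t + r))).2.1 y).sub ((c2_facts (hy t)).2.1 y)).deriv
    rw [e1, e3, hpde t ht0 y hyI, hpde (t + r) (by positivity) y hyI]
    ring
  · intro t ht0
    have h1 := hbc t ht0
    have h2 := hbc (t + r) (by positivity)
    simp [h1.1, h1.2, h2.1, h2.2]

lemma lipschitz_time {ν : ℝ} {k : ℤ} {ω : ℝ → ℝ → ℂ} (hν : 0 < ν) (h : IsSol ν k ω) {δ : ℝ}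
    (hδ : 0 < δ) : ∃ N r : ℝ, 0 ≤ N ∧ 0 < r ∧ ∀ s t : ℝ, 2 * δ ≤ s → 2 * δ ≤ t → |s - t| < r →
      ∀ y ∈ Icc (-1:ℝ) 1, ‖ω s y - ω t y‖ ≤ N * |s - t| := by
  have h' := h
  obtain ⟨hc, ht, hy, hpde, hbc⟩ := h
  let f : ℕ → Set ℝ := fun N => ⋂ y ∈ Icc (-1:ℝ) 1,
    {t | ‖deriv (fun s => ω s y) (max t δ)‖ ≤ N}
  have hcl : ∀ N, IsClosed (f N) := by
    intro N
    refine isClosed_biInter fun y _ => ?_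
    have := (c1_facts (ht y)).2
    exact isClosed_le (by fun_prop) continuous_const
  have hU : ⋃ N, f N = univ := by
    refine eq_univ_of_forall fun t => ?_
    have hpos : 0 < max t δ := lt_max_of_lt_right hδ
    obtain ⟨-, -, c0, c1, c2⟩ := c2_facts (hy (max t δ))
    have hco : ContinuousOn (fun y => ‖deriv (fun s => ω s y) (max t δ)‖) (Icc (-1:ℝ) 1) := by
      have : Continuous (fun y : ℝ => ‖(ν : ℂ) * (deriv (deriv (ω (max t δ))) y
          - (k:ℂ)^2 * ω (max t δ) y) - Complex.I * (k:ℂ) * (y:ℂ) * ω (max t δ) y‖) := by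
        fun_prop
      refine this.continuousOn.congr ?_
      intro y hy
      simp only
      rw [hpde _ hpos y hy]
    obtain ⟨M, hM⟩ := (isCompact_Icc.image_of_continuousOn hco).bddAbove
    obtain ⟨N, hN⟩ := exists_nat_ge M
    refine mem_iUnion.2 ⟨N, mem_iInter₂.2 fun y hy => ?_⟩
    exact (hM ⟨y, hy, rfl⟩).trans hN
  have hd := dense_iUnion_interior_of_closed hcl hU
  obtain ⟨t0, ht0, ht0'⟩ := hd.exists_mem_open isOpen_Ioo (nonempty_Ioo.2 (by linarith : δ < 2 * δ))
  obtain ⟨N, hN⟩ := mem_iUnion.1 ht0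
  obtain ⟨r, hr, hball⟩ := Metric.isOpen_iff.1 isOpen_interior t0 hN
  have key : ∀ η, 0 ≤ η → η < r → ∀ t, 2 * δ ≤ t → ∀ y ∈ Icc (-1:ℝ) 1,
      ‖ω (t + η) y - ω t y‖ ≤ N * η := by
    intro η hη hηr t h2t
    refine max_principle (W := fun t y => ω (t + η) y - ω t y) hν (h'.shift_sub hη)
      (hδ.trans ht0'.1).le (ht0'.2.le.trans h2t) ?_
    intro y hy
    have := (convex_Icc t0 (t0 + η)).norm_image_sub_le_of_norm_deriv_le (𝕜 := ℝ)
      (f := fun s => ω s y) (C := N) (x := t0) (y := t0 + η)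
      (fun x _ => ((c1_facts (ht y)).1 x).differentiableAt) ?_ ⟨le_rfl, by linarith⟩
      ⟨by linarith, le_rfl⟩
    · simpa [abs_of_nonneg hη] using this
    · intro x hx
      have hx1 : x ∈ Metric.ball t0 r := by
        rw [Metric.mem_ball, Real.dist_eq, abs_lt]
        constructor <;> linarith [hx.1, hx.2]
      have hx2 := mem_iInter₂.1 (interior_subset (hball hx1)) y hy
      have : max x δ = x := max_eq_left (by linarith [hx.1, ht0'.1])
      simpa [this] using hx2
  refine ⟨N, r, Nat.cast_nonneg _, hr, ?_⟩
  intro s t hs ht hst y hy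
  rcases le_total t s with hle | hle
  · rw [abs_of_nonneg (by linarith)] at hst ⊢
    have := key (s - t) (by linarith) hst t ht y hy
    simpa using this
  · rw [abs_sub_comm, abs_of_nonneg (by linarith)] at hst ⊢
    have := key (t - s) (by linarith) hst s hs y hy
    rw [norm_sub_rev]
    simpa using this

lemma int_deriv_zero {F F' : ℝ → ℝ} (h : ∀ x, HasDerivAt F (F' x) x) (hc : Continuous F')
    (h1 : F 1 = 0) (h2 : F (-1) = 0) : ∫ y in (-1:ℝ)..1, F' y = 0 := by
  rw [intervalIntegral.integral_eq_sub_of_hasDerivAt (fun x _ => h x) (hc.intervalIntegrable _ _),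
    h1, h2, sub_zero]

lemma ibp1 {f g : ℝ → ℂ} (hf : ContDiff ℝ 2 f) (hg : ContDiff ℝ 2 g) (h1 : f 1 = 0)
    (h2 : f (-1) = 0) : ∫ y in (-1:ℝ)..1, inner ℝ (f y) (deriv (deriv g) y)
      = - ∫ y in (-1:ℝ)..1, inner ℝ (deriv f y) (deriv g y) := by
  obtain ⟨f1, f2, cf0, cf1, cf2⟩ := c2_facts hf
  obtain ⟨g1, g2, cg0, cg1, cg2⟩ := c2_facts hg
  have := int_deriv_zero (fun x => (f1 x).inner ℝ (g2 x)) (by fun_prop) (by simp [h1]) (by simp [h2])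
  rw [intervalIntegral.integral_add (Continuous.intervalIntegrable (by fun_prop) _ _)
    (Continuous.intervalIntegrable (by fun_prop) _ _)] at this
  linarith

lemma ibp2 {f : ℝ → ℂ} (hf : ContDiff ℝ 2 f) (h1 : f 1 = 0)
    (h2 : f (-1) = 0) : ∫ y in (-1:ℝ)..1, y * inner ℝ (f y) (deriv f y)
      = - (1 / 2) * ∫ y in (-1:ℝ)..1, ‖f y‖ ^ 2 := by
  obtain ⟨f1, f2, cf0, cf1, cf2⟩ := c2_facts hf
  have := int_deriv_zero (fun x => (hasDerivAt_id x).mul (f1 x).norm_sq) (by simp only [id]; fun_prop)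
    (by simp [h1]) (by simp [h2])
  rw [intervalIntegral.integral_add (Continuous.intervalIntegrable (by fun_prop) _ _)
    (Continuous.intervalIntegrable (by simp only [id]; fun_prop) _ _)] at this
  simp only [id, one_mul] at this
  have e : (∫ y in (-1:ℝ)..1, y * (2 * inner ℝ (f y) (deriv f y)))
      = 2 * ∫ y in (-1:ℝ)..1, y * inner ℝ (f y) (deriv f y) := by
    rw [← intervalIntegral.integral_const_mul]
    congr 1; funext y; ring
  rw [e] at this
  linarith

lemma ibp3 {f : ℝ → ℂ} (hf : ContDiff ℝ 2 f) (h1 : f 1 = 0)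
    (h2 : f (-1) = 0) : ∫ y in (-1:ℝ)..1, inner ℝ (Complex.I * y * f y) (deriv (deriv f) y)
      = - ∫ y in (-1:ℝ)..1, inner ℝ (deriv f y) (Complex.I * f y) := by
  obtain ⟨f1, f2, cf0, cf1, cf2⟩ := c2_facts hf
  have d : ∀ x : ℝ, HasDerivAt (fun y : ℝ => Complex.I * y * f y)
      (Complex.I * 1 * f x + Complex.I * x * deriv f x) x := fun x =>
    (((hasDerivAt_id x).ofReal_comp).const_mul Complex.I).mul (f1 x)
  have := int_deriv_zero (fun x => (d x).inner ℝ (f2 x)) (by fun_prop) (by simp [h1]) (by simp [h2])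
  rw [intervalIntegral.integral_add (Continuous.intervalIntegrable (by fun_prop) _ _)
    (Continuous.intervalIntegrable (by fun_prop) _ _)] at this
  have e : (∫ y in (-1:ℝ)..1, inner ℝ (Complex.I * 1 * f y + Complex.I * y * deriv f y) (deriv f y))
      = ∫ y in (-1:ℝ)..1, inner ℝ (deriv f y) (Complex.I * f y) := by
    congr 1; funext y
    simp [Complex.inner]
    ring
  rw [e] at this
  linarith

lemma ibp4 {f g : ℝ → ℂ} (hf : ContDiff ℝ 2 f) (hg : ContDiff ℝ 2 g) (h1 : f 1 = 0)
    (h2 : f (-1) = 0) : ∫ y in (-1:ℝ)..1, inner ℝ (deriv f y) (Complex.I * g y)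
      = - ∫ y in (-1:ℝ)..1, inner ℝ (f y) (Complex.I * deriv g y) := by
  obtain ⟨f1, f2, cf0, cf1, cf2⟩ := c2_facts hf
  obtain ⟨g1, g2, cg0, cg1, cg2⟩ := c2_facts hg
  have := int_deriv_zero (fun x => (f1 x).inner ℝ ((g1 x).const_mul Complex.I)) (by fun_prop)
    (by simp [h1]) (by simp [h2])
  rw [intervalIntegral.integral_add (Continuous.intervalIntegrable (by fun_prop) _ _)
    (Continuous.intervalIntegrable (by fun_prop) _ _)] at this
  linarith

lemma poincare {f : ℝ → ℂ} (hf : ContDiff ℝ 2 f) (h1 : f 1 = 0) (h2 : f (-1) = 0) :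
    ∫ y in (-1:ℝ)..1, ‖f y‖ ^ 2 ≤ ∫ y in (-1:ℝ)..1, ‖deriv f y‖ ^ 2 := by
  obtain ⟨f1, f2, cf0, cf1, cf2⟩ := c2_facts hf
  have hcos : ∀ y ∈ uIcc (-1:ℝ) 1, Real.cos y ≠ 0 := by
    intro y hy
    rw [uIcc_of_le (by norm_num)] at hy
    have := Real.pi_gt_three
    exact (Real.cos_pos_of_mem_Ioo ⟨by linarith [hy.1], by linarith [hy.2]⟩).ne'
  have hct : ContinuousOn Real.tan (uIcc (-1:ℝ) 1) :=
    Real.continuousOn_tan.mono hcos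
  have d : ∀ y ∈ uIcc (-1:ℝ) 1, HasDerivAt (fun y => Real.tan y * ‖f y‖ ^ 2)
      ((1 + Real.tan y ^ 2) * ‖f y‖ ^ 2 + Real.tan y * (2 * inner ℝ (f y) (deriv f y))) y := by
    intro y hy
    have h := (Real.hasDerivAt_tan (hcos y hy)).mul (f1 y).norm_sq
    have e : 1 / Real.cos y ^ 2 = 1 + Real.tan y ^ 2 := by
      rw [Real.tan_eq_sin_div_cos]
      have := hcos y hy
      field_simp
      linarith [Real.sin_sq_add_cos_sq y]
    rw [e] at h
    exact h
  have hI : IntervalIntegrable (fun y => (1 + Real.tan y ^ 2) * ‖f y‖ ^ 2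
      + Real.tan y * (2 * inner ℝ (f y) (deriv f y))) volume (-1) 1 := by
    apply ContinuousOn.intervalIntegrable
    have a1 : ContinuousOn (fun y => ‖f y‖ ^ 2) (uIcc (-1:ℝ) 1) := by fun_prop
    have a2 : ContinuousOn (fun y => 2 * inner ℝ (f y) (deriv f y)) (uIcc (-1:ℝ) 1) := by fun_prop
    exact ((continuousOn_const.add (hct.pow 2)).mul a1).add (hct.mul a2)
  have h0 := intervalIntegral.integral_eq_sub_of_hasDerivAt d hI
  simp only [h1, h2, norm_zero] at h0
  have hmono : ∫ y in (-1:ℝ)..1, (‖f y‖ ^ 2 - ‖deriv f y‖ ^ 2) ≤ ∫ y in (-1:ℝ)..1,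
      ((1 + Real.tan y ^ 2) * ‖f y‖ ^ 2 + Real.tan y * (2 * inner ℝ (f y) (deriv f y))) := by
    apply intervalIntegral.integral_mono_on (by norm_num)
      (Continuous.intervalIntegrable (by fun_prop) _ _) hI
    intro y _
    have := sq_nonneg (‖Real.tan y • f y + deriv f y‖)
    rw [norm_add_sq_real, inner_smul_left, norm_smul, mul_pow] at this
    simp only [Real.norm_eq_abs, sq_abs, conj_trivial] at this
    nlinarith
  rw [intervalIntegral.integral_sub (Continuous.intervalIntegrable (by fun_prop) _ _)
    (Continuous.intervalIntegrable (by fun_prop) _ _)] at hmono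
  rw [h0] at hmono
  simp at hmono
  linarith

lemma deriv_rep {f : ℝ → ℂ} (hf : ContDiff ℝ 2 f) (h1 : f 1 = 0) (h2 : f (-1) = 0) (y : ℝ) :
    2 * deriv f y = (∫ x in (-1:ℝ)..y, (x + 1 : ℂ) * deriv (deriv f) x)
      - ∫ x in y..(1:ℝ), (1 - x : ℂ) * deriv (deriv f) x := by
  obtain ⟨f1, f2, cf0, cf1, cf2⟩ := c2_facts hf
  have d1 : ∀ x : ℝ, HasDerivAt (fun x : ℝ => (x + 1 : ℂ) * deriv f x - f x)
      ((x + 1 : ℂ) * deriv (deriv f) x) x := by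
    intro x
    refine (((((hasDerivAt_id x).ofReal_comp).add_const (1:ℂ)).mul (f2 x)).sub
      (f1 x)).congr_deriv ?_
    simp
  have d2 : ∀ x : ℝ, HasDerivAt (fun x : ℝ => (1 - x : ℂ) * deriv f x + f x)
      ((1 - x : ℂ) * deriv (deriv f) x) x := by
    intro x
    refine (((((hasDerivAt_id x).ofReal_comp).const_sub (1:ℂ)).mul (f2 x)).add
      (f1 x)).congr_deriv ?_
    simp
  rw [intervalIntegral.integral_eq_sub_of_hasDerivAt (fun x _ => d1 x)
      (Continuous.intervalIntegrable (by fun_prop) _ _),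
    intervalIntegral.integral_eq_sub_of_hasDerivAt (fun x _ => d2 x)
      (Continuous.intervalIntegrable (by fun_prop) _ _)]
  simp [h1, h2]
  ring

lemma deriv_lemma {F : ℝ → ℝ} {u g : ℝ → ℝ → ℂ} {p G : ℝ → ℂ} {t N M : ℝ}
    (hF : ∀ᶠ s in 𝓝 t, F s - F t = ∫ y in (-1:ℝ)..1, inner ℝ (u s y - u t y) (g s y))
    (hu : ∀ s, Continuous (u s)) (hg : ∀ s, Continuous (g s))
    (hN : ∀ᶠ s in 𝓝 t, ∀ y ∈ Icc (-1:ℝ) 1, ‖u s y - u t y‖ ≤ N * |s - t|)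
    (hM : ∀ᶠ s in 𝓝 t, ∀ y ∈ Icc (-1:ℝ) 1, ‖g s y‖ ≤ M)
    (hp : ∀ y ∈ Icc (-1:ℝ) 1, HasDerivAt (fun s => u s y) (p y) t)
    (hG : ∀ y ∈ Icc (-1:ℝ) 1, Tendsto (fun s => g s y) (𝓝 t) (𝓝 (G y))) :
    HasDerivAt F (∫ y in (-1:ℝ)..1, inner ℝ (p y) (G y)) t := by
  rw [hasDerivAt_iff_tendsto_slope]
  have hsub : ∀ y, y ∈ uIoc (-1:ℝ) 1 → y ∈ Icc (-1:ℝ) 1 := by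
    intro y hy
    rw [uIoc_of_le (by norm_num)] at hy
    exact ⟨hy.1.le, hy.2⟩
  have key : Tendsto (fun s => ∫ y in (-1:ℝ)..1, inner ℝ (slope (fun s => u s y) t s) (g s y))
      (𝓝[≠] t) (𝓝 (∫ y in (-1:ℝ)..1, inner ℝ (p y) (G y))) := by
    apply intervalIntegral.tendsto_integral_filter_of_dominated_convergence (fun _ => N * M)
    · refine Eventually.of_forall fun s => Continuous.aestronglyMeasurable ?_
      have := hu s
      have := hu t
      have := hg s
      simp only [slope, vsub_eq_sub]
      fun_prop
    · filter_upwards [nhdsWithin_le_nhds hN, nhdsWithin_le_nhds hM, self_mem_nhdsWithin]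
        with s h1 h2 h3
      refine Eventually.of_forall fun y hy => ?_
      have hpos : 0 < |s - t| := abs_pos.2 (sub_ne_zero.2 h3)
      have h4 : ‖slope (fun s => u s y) t s‖ ≤ N := by
        simp only [slope, vsub_eq_sub, norm_smul, norm_inv, Real.norm_eq_abs]
        rw [inv_mul_le_iff₀ hpos, mul_comm]
        exact h1 y (hsub y hy)
      refine (norm_inner_le_norm _ _).trans ?_
      exact mul_le_mul h4 (h2 y (hsub y hy)) (norm_nonneg _) ((norm_nonneg _).trans h4)
    · exact intervalIntegrable_const
    · refine Eventually.of_forall fun y hy => ?_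
      exact (hasDerivAt_iff_tendsto_slope.1 (hp y (hsub y hy))).inner
        ((hG y (hsub y hy)).mono_left nhdsWithin_le_nhds)
  refine key.congr' ?_
  filter_upwards [nhdsWithin_le_nhds hF] with s hs
  simp only [slope, vsub_eq_sub]
  rw [hs, smul_eq_mul, ← intervalIntegral.integral_const_mul]
  congr 1; funext y
  rw [inner_smul_left]; simp

lemma reg {ν : ℝ} {k : ℤ} {ω : ℝ → ℝ → ℂ} (hν : 0 < ν) (h : IsSol ν k ω) {t : ℝ} (ht0 : 0 < t) :
    ∃ N Z : ℝ, 
      (∀ᶠ s in 𝓝 t, ∀ y ∈ Icc (-1:ℝ) 1, ‖ω s y - ω t y‖ ≤ N * |s - t|) ∧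
      (∀ᶠ s in 𝓝 t, ∀ y ∈ Icc (-1:ℝ) 1, ‖ω s y‖ ≤ Z ∧ ‖deriv (ω s) y‖ ≤ Z ∧
        ‖deriv (deriv (ω s)) y‖ ≤ Z) ∧
      (∀ y ∈ Icc (-1:ℝ) 1, Tendsto (fun s => deriv (ω s) y) (𝓝 t) (𝓝 (deriv (ω t) y))) ∧
      (∀ y ∈ Icc (-1:ℝ) 1, Tendsto (fun s => deriv (deriv (ω s)) y) (𝓝 t)
        (𝓝 (deriv (deriv (ω t)) y))) := by
  obtain ⟨N, r, hN0, hr, hN⟩ := lipschitz_time hν h (δ := t / 4) (by linarith)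
  obtain ⟨hc, ht, hy, hpde, hbc⟩ := h
  obtain ⟨M, hM⟩ := ((isCompact_Icc (a := t/2) (b := t + 1)).prod
    (isCompact_Icc (a := (-1:ℝ)) (b := 1))).bddAbove_image (f := fun p : ℝ × ℝ => ‖ω p.1 p.2‖)
      (by fun_prop)
  have hM' : ∀ s ∈ Ioo (t/2) (t+1), ∀ y ∈ Icc (-1:ℝ) 1, ‖ω s y‖ ≤ M := fun s hs y hy =>
    hM ⟨(s, y), ⟨⟨hs.1.le, hs.2.le⟩, hy⟩, rfl⟩
  have hM0 : 0 ≤ M := (norm_nonneg _).trans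
    (hM' t ⟨by linarith, by linarith⟩ 0 ⟨by norm_num, by norm_num⟩)
  have hzz : ∀ s > 0, ∀ y ∈ Icc (-1:ℝ) 1, deriv (deriv (ω s)) y
      = (ν:ℂ)⁻¹ * (deriv (fun s => ω s y) s + Complex.I * k * y * ω s y) + (k:ℂ)^2 * ω s y := by
    intro s hs y hyI
    rw [hpde s hs y hyI]
    have : (ν:ℂ) ≠ 0 := by exact_mod_cast hν.ne'
    field_simp
    ring
  have hp : ∀ s ∈ Ioo (t/2) (t+1), ∀ y ∈ Icc (-1:ℝ) 1, ‖deriv (fun s => ω s y) s‖ ≤ N := by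
    intro s hs y hyI
    refine norm_deriv_le_of_lip' hN0 ?_
    filter_upwards [Ioi_mem_nhds hs.1, Metric.ball_mem_nhds s hr] with x hx hx'
    refine hN x s ?_ ?_ ?_ y hyI
    · linarith [mem_Ioi.1 hx]
    · linarith [hs.1]
    · simpa [Real.dist_eq] using hx'
  set Z := ν⁻¹ * (N + |(k:ℝ)| * M) + (k:ℝ)^2 * M with hZ
  have hZ0 : 0 ≤ Z := by positivity
  have hz : ∀ s ∈ Ioo (t/2) (t+1), ∀ y ∈ Icc (-1:ℝ) 1, ‖deriv (deriv (ω s)) y‖ ≤ Z := by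
    intro s hs y hyI
    rw [hzz s (by linarith [hs.1]) y hyI]
    have hy1 : |y| ≤ 1 := abs_le.2 hyI
    have h1 := hp s hs y hyI
    have h2 := hM' s hs y hyI
    refine (norm_add_le _ _).trans ?_
    rw [norm_mul, norm_mul, norm_inv, norm_pow]
    have e : ‖(k:ℂ)‖ = |(k:ℝ)| := by simp
    have e2 : ‖(ν:ℂ)‖ = ν := by simp [abs_of_pos hν]
    have h3 : ‖Complex.I * k * y * ω s y‖ ≤ |(k:ℝ)| * M := by
      simp only [norm_mul, Complex.norm_I, e, one_mul, Complex.norm_real, Real.norm_eq_abs]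
      calc |(k:ℝ)| * |y| * ‖ω s y‖ ≤ |(k:ℝ)| * 1 * M := by gcongr
        _ = _ := by ring
    rw [e, e2, sq_abs, hZ]
    gcongr
    exact (norm_add_le _ _).trans (by gcongr)
  have hzt : ∀ y ∈ Icc (-1:ℝ) 1, Tendsto (fun s => deriv (deriv (ω s)) y) (𝓝 t)
        (𝓝 (deriv (deriv (ω t)) y)) := by
    intro y hyI
    have c1 := (c1_facts (ht y)).2
    have c0 := (ht y).continuous
    have hcont : Continuous (fun s => (ν:ℂ)⁻¹ * (deriv (fun s => ω s y) s
        + Complex.I * k * y * ω s y) + (k:ℂ)^2 * ω s y) := by fun_prop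
    rw [hzz t ht0 y hyI]
    refine (hcont.tendsto t).congr' ?_
    filter_upwards [Ioi_mem_nhds ht0] with s hs
    rw [hzz s hs y hyI]
  have hnb : Ioo (t/2) (t+1) ∈ 𝓝 t := Ioo_mem_nhds (by linarith) (by linarith)
  have hsub1 : ∀ y ∈ Icc (-1:ℝ) 1, ∀ x ∈ uIoc (-1:ℝ) y, x ∈ Icc (-1:ℝ) 1 := by
    intro y hy x hx
    rw [uIoc_of_le hy.1] at hx
    exact ⟨hx.1.le, hx.2.trans hy.2⟩
  have hsub2 : ∀ y ∈ Icc (-1:ℝ) 1, ∀ x ∈ uIoc y (1:ℝ), x ∈ Icc (-1:ℝ) 1 := by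
    intro y hy x hx
    rw [uIoc_of_le hy.2] at hx
    exact ⟨hy.1.trans hx.1.le, hx.2⟩
  have hw1 : ∀ x ∈ Icc (-1:ℝ) 1, ‖(x + 1 : ℂ)‖ ≤ 2 := by
    intro x hx
    have : (x + 1 : ℂ) = ((x + 1 : ℝ) : ℂ) := by push_cast; rfl
    rw [this, Complex.norm_real, Real.norm_eq_abs, abs_le]
    constructor <;> linarith [hx.1, hx.2]
  have hw2 : ∀ x ∈ Icc (-1:ℝ) 1, ‖(1 - x : ℂ)‖ ≤ 2 := by
    intro x hx
    have : (1 - x : ℂ) = ((1 - x : ℝ) : ℂ) := by push_cast; rfl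
    rw [this, Complex.norm_real, Real.norm_eq_abs, abs_le]
    constructor <;> linarith [hx.1, hx.2]
  have hb1 : ∀ s ∈ Ioo (t/2) (t+1), ∀ x ∈ Icc (-1:ℝ) 1,
      ‖(x + 1 : ℂ) * deriv (deriv (ω s)) x‖ ≤ 2 * Z := by
    intro s hs x hx
    rw [norm_mul]
    exact mul_le_mul (hw1 x hx) (hz s hs x hx) (norm_nonneg _) (by norm_num)
  have hb2 : ∀ s ∈ Ioo (t/2) (t+1), ∀ x ∈ Icc (-1:ℝ) 1,
      ‖(1 - x : ℂ) * deriv (deriv (ω s)) x‖ ≤ 2 * Z := by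
    intro s hs x hx
    rw [norm_mul]
    exact mul_le_mul (hw2 x hx) (hz s hs x hx) (norm_nonneg _) (by norm_num)
  have hv : ∀ s ∈ Ioo (t/2) (t+1), ∀ y ∈ Icc (-1:ℝ) 1, ‖deriv (ω s) y‖ ≤ 4 * Z := by
    intro s hs y hyI
    have hb := hbc s (by linarith [hs.1])
    have hrep := deriv_rep (hy s) hb.2 hb.1 y
    have i1 := intervalIntegral.norm_integral_le_of_norm_le_const
      (fun x hx => hb1 s hs x (hsub1 y hyI x hx))
    have i2 := intervalIntegral.norm_integral_le_of_norm_le_const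
      (fun x hx => hb2 s hs x (hsub2 y hyI x hx))
    rw [abs_of_nonneg (by linarith [hyI.1])] at i1
    rw [abs_of_nonneg (by linarith [hyI.2])] at i2
    have h2 : ‖2 * deriv (ω s) y‖ = 2 * ‖deriv (ω s) y‖ := by simp
    have h3 := congrArg norm hrep
    rw [h2] at h3
    have h4 := norm_sub_le (∫ x in (-1:ℝ)..y, (x + 1 : ℂ) * deriv (deriv (ω s)) x)
      (∫ x in y..(1:ℝ), (1 - x : ℂ) * deriv (deriv (ω s)) x)
    nlinarith
  have hvt : ∀ y ∈ Icc (-1:ℝ) 1, Tendsto (fun s => deriv (ω s) y) (𝓝 t) (𝓝 (deriv (ω t) y)) := by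
    intro y hyI
    have hrep : ∀ s ≥ 0, deriv (ω s) y
        = (1/2) * ((∫ x in (-1:ℝ)..y, (x + 1 : ℂ) * deriv (deriv (ω s)) x)
      - ∫ x in y..(1:ℝ), (1 - x : ℂ) * deriv (deriv (ω s)) x) := by
      intro s hs
      rw [← deriv_rep (hy s) (hbc s hs).2 (hbc s hs).1 y]; ring
    rw [hrep t ht0.le]
    have T1 : Tendsto (fun s => ∫ x in (-1:ℝ)..y, (x + 1 : ℂ) * deriv (deriv (ω s)) x) (𝓝 t)
        (𝓝 (∫ x in (-1:ℝ)..y, (x + 1 : ℂ) * deriv (deriv (ω t)) x)) := by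
      apply intervalIntegral.tendsto_integral_filter_of_dominated_convergence (fun _ => 2 * Z)
      · refine Eventually.of_forall fun s => Continuous.aestronglyMeasurable ?_
        have := (c2_facts (hy s)).2.2.2.2
        fun_prop
      · filter_upwards [hnb] with s hs
        exact Eventually.of_forall fun x hx => hb1 s hs x (hsub1 y hyI x hx)
      · exact intervalIntegrable_const
      · exact Eventually.of_forall fun x hx => (hzt x (hsub1 y hyI x hx)).const_mul _
    have T2 : Tendsto (fun s => ∫ x in y..(1:ℝ), (1 - x : ℂ) * deriv (deriv (ω s)) x) (𝓝 t)
        (𝓝 (∫ x in y..(1:ℝ), (1 - x : ℂ) * deriv (deriv (ω t)) x)) := by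
      apply intervalIntegral.tendsto_integral_filter_of_dominated_convergence (fun _ => 2 * Z)
      · refine Eventually.of_forall fun s => Continuous.aestronglyMeasurable ?_
        have := (c2_facts (hy s)).2.2.2.2
        fun_prop
      · filter_upwards [hnb] with s hs
        exact Eventually.of_forall fun x hx => hb2 s hs x (hsub2 y hyI x hx)
      · exact intervalIntegrable_const
      · exact Eventually.of_forall fun x hx => (hzt x (hsub2 y hyI x hx)).const_mul _
    refine ((T1.sub T2).const_mul (1/2)).congr' ?_
    filter_upwards [hnb] with s hs
    rw [hrep s (by linarith [hs.1])]
  refine ⟨N, M + 4 * Z, ?_, ?_, hvt, hzt⟩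
  · filter_upwards [hnb, Metric.ball_mem_nhds t hr] with s hs hs' y hyI
    exact hN s t (by linarith [hs.1]) (by linarith) (by simpa [Real.dist_eq] using hs') y hyI
  · filter_upwards [hnb] with s hs y hyI
    refine ⟨?_, ?_, ?_⟩
    · linarith [hM' s hs y hyI]
    · linarith [hv s hs y hyI]
    · linarith [hz s hs y hyI]

noncomputable def eE (ω : ℝ → ℝ → ℂ) (t : ℝ) : ℝ := ∫ y in (-1:ℝ)..1, ‖ω t y‖ ^ 2
noncomputable def eD (ω : ℝ → ℝ → ℂ) (t : ℝ) : ℝ := ∫ y in (-1:ℝ)..1, ‖deriv (ω t) y‖ ^ 2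
noncomputable def eH (ω : ℝ → ℝ → ℂ) (t : ℝ) : ℝ :=
  ∫ y in (-1:ℝ)..1, ‖deriv (deriv (ω t)) y‖ ^ 2
noncomputable def eB (ω : ℝ → ℝ → ℂ) (t : ℝ) : ℝ :=
  ∫ y in (-1:ℝ)..1, inner ℝ (deriv (ω t) y) (Complex.I * ω t y)
noncomputable def eR (ω : ℝ → ℝ → ℂ) (t : ℝ) : ℝ :=
  ∫ y in (-1:ℝ)..1, inner ℝ (deriv (deriv (ω t)) y) (Complex.I * deriv (ω t) y)

lemma lin2 {F f g : ℝ → ℝ} (a b : ℝ) (hf : Continuous f) (hg : Continuous g)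
    (h : ∀ y, F y = a * f y + b * g y) :
    ∫ y in (-1:ℝ)..1, F y = a * (∫ y in (-1:ℝ)..1, f y) + b * ∫ y in (-1:ℝ)..1, g y := by
  rw [funext h, intervalIntegral.integral_add (Continuous.intervalIntegrable (by fun_prop) _ _)
    (Continuous.intervalIntegrable (by fun_prop) _ _), intervalIntegral.integral_const_mul,
    intervalIntegral.integral_const_mul]

lemma lin3 {F f g j : ℝ → ℝ} (a b c : ℝ) (hf : Continuous f) (hg : Continuous g)
    (hj : Continuous j) (h : ∀ y, F y = a * f y + b * g y + c * j y) :
    ∫ y in (-1:ℝ)..1, F y = a * (∫ y in (-1:ℝ)..1, f y) + b * (∫ y in (-1:ℝ)..1, g y)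
      + c * ∫ y in (-1:ℝ)..1, j y := by
  rw [lin2 (F := F) (f := fun y => a * f y + b * g y) (g := j) 1 c (by fun_prop) hj
    (fun y => by rw [h]; ring), lin2 a b hf hg (fun y => rfl), one_mul]

lemma lin4 {F f g j l : ℝ → ℝ} (a b c d : ℝ) (hf : Continuous f) (hg : Continuous g)
    (hj : Continuous j) (hl : Continuous l)
    (h : ∀ y, F y = a * f y + b * g y + c * j y + d * l y) :
    ∫ y in (-1:ℝ)..1, F y = a * (∫ y in (-1:ℝ)..1, f y) + b * (∫ y in (-1:ℝ)..1, g y)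
      + c * (∫ y in (-1:ℝ)..1, j y) + d * ∫ y in (-1:ℝ)..1, l y := by
  rw [lin2 (F := F) (f := fun y => a * f y + b * g y + c * j y) (g := l) 1 d (by fun_prop) hl
    (fun y => by rw [h]; ring), lin3 a b c hf hg hj (fun y => rfl), one_mul]

/-- The right-hand side of the equation. -/
noncomputable def rhs (ν κ : ℝ) (ω : ℝ → ℝ → ℂ) (t y : ℝ) : ℂ :=
  (ν : ℂ) * (deriv (deriv (ω t)) y - (κ:ℂ)^2 * ω t y) - Complex.I * (κ:ℂ) * (y:ℂ) * ω t y

section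
variable {ν : ℝ} {k : ℤ} {ω : ℝ → ℝ → ℂ}

lemma IsSol.hasDerivAt (h : IsSol ν k ω) {t : ℝ} (ht : 0 < t) :
    ∀ y ∈ Icc (-1:ℝ) 1, HasDerivAt (fun s => ω s y) (rhs ν k ω t y) t := by
  intro y hy
  have e := (c1_facts (h.2.1 y)).1 t
  rw [h.2.2.2.1 t ht y hy] at e
  simpa [rhs] using e

lemma deriv_E (hν : 0 < ν) (h : IsSol ν k ω) {t : ℝ} (ht : 0 < t) :
    HasDerivAt (eE ω) (-2 * ν * eD ω t - 2 * ν * (k:ℝ)^2 * eE ω t) t := by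
  obtain ⟨N, Z, hN, hZ, hv, hz⟩ := reg hν h ht
  have hd := h.hasDerivAt ht
  obtain ⟨hc, -, hy, -, hbc⟩ := h
  have hcs : ∀ s, Continuous (ω s) := fun s => (c2_facts (hy s)).2.2.1
  have key := deriv_lemma (F := eE ω) (u := ω) (g := fun s y => ω s y + ω t y) (M := Z + Z)
    (G := fun y => ω t y + ω t y) ?_ hcs
    (fun s => (hcs s).add (hcs t)) hN ?_ hd
    (fun y hy => ((hd y hy).continuousAt.tendsto).add tendsto_const_nhds)
  · refine key.congr_deriv ?_
    obtain ⟨-, -, c0, c1, c2⟩ := c2_facts (hy t)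
    have e1 := ibp1 (hy t) (hy t) (hbc t ht.le).2 (hbc t ht.le).1
    rw [lin2 (2 * ν) (-2 * ν * (k:ℝ)^2) (f := fun y => inner ℝ (ω t y) (deriv (deriv (ω t)) y))
      (g := fun y => ‖ω t y‖^2) (by fun_prop) (by fun_prop)]
    · rw [e1, eE, eD]
      simp only [real_inner_self_eq_norm_sq]
      ring
    · intro y
      rw [← real_inner_self_eq_norm_sq, rhs]
      generalize (k:ℝ) = κ
      simp only [Complex.inner, ← Complex.ofReal_pow, Complex.mul_re, Complex.mul_im, Complex.sub_re, Complex.sub_im,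
        Complex.add_re, Complex.add_im,
        Complex.conj_re, Complex.conj_im, Complex.ofReal_re, Complex.ofReal_im, Complex.I_re,
        Complex.I_im]
      ring
  · refine Eventually.of_forall fun s => ?_
    have := hcs s
    have := hcs t
    rw [lin2 1 (-1) (f := fun y => ‖ω s y‖^2) (g := fun y => ‖ω t y‖^2)
      (by fun_prop) (by fun_prop)]
    · rw [eE, eE]; ring
    · intro y
      rw [← real_inner_self_eq_norm_sq, ← real_inner_self_eq_norm_sq, inner_sub_left,
        inner_add_right, inner_add_right, real_inner_comm (ω s y) (ω t y)]
      ring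
  · filter_upwards [hZ] with s hs y hy
    exact (norm_add_le _ _).trans (add_le_add (hs y hy).1 (hZ.self_of_nhds y hy).1)

lemma deriv_D (hν : 0 < ν) (h : IsSol ν k ω) {t : ℝ} (ht : 0 < t) :
    HasDerivAt (eD ω) (-2 * ν * eH ω t - 2 * ν * (k:ℝ)^2 * eD ω t - 2 * k * eB ω t) t := by
  obtain ⟨N, Z, hN, hZ, hv, hz⟩ := reg hν h ht
  have hd := h.hasDerivAt ht
  obtain ⟨hc, -, hy, -, hbc⟩ := h
  have hcs : ∀ s, Continuous (ω s) := fun s => (c2_facts (hy s)).2.2.1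
  have hcz : ∀ s, Continuous (deriv (deriv (ω s))) := fun s => (c2_facts (hy s)).2.2.2.2
  have key := deriv_lemma (F := eD ω) (u := ω)
    (g := fun s y => -(deriv (deriv (ω s)) y + deriv (deriv (ω t)) y)) (M := Z + Z)
    (G := fun y => -(deriv (deriv (ω t)) y + deriv (deriv (ω t)) y)) ?_ hcs
    (fun s => ((hcz s).add (hcz t)).neg) hN ?_ hd
    (fun y hy => ((hz y hy).add tendsto_const_nhds).neg)
  · refine key.congr_deriv ?_
    obtain ⟨-, -, c0, c1, c2⟩ := c2_facts (hy t)
    have e1 := ibp1 (hy t) (hy t) (hbc t ht.le).2 (hbc t ht.le).1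
    have e3 := ibp3 (hy t) (hbc t ht.le).2 (hbc t ht.le).1
    rw [lin3 (-2 * ν) (2 * ν * (k:ℝ)^2) (2 * k) (f := fun y => ‖deriv (deriv (ω t)) y‖^2)
      (g := fun y => inner ℝ (ω t y) (deriv (deriv (ω t)) y))
      (j := fun y => inner ℝ (Complex.I * y * ω t y) (deriv (deriv (ω t)) y))
      (by fun_prop) (by fun_prop) (by fun_prop)]
    · rw [e1, e3, eH, eD, eB]
      simp only [real_inner_self_eq_norm_sq]
      ring
    · intro y
      rw [← real_inner_self_eq_norm_sq, rhs]
      generalize (k:ℝ) = κ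
      simp only [Complex.inner, ← Complex.ofReal_pow, Complex.mul_re, Complex.mul_im, Complex.sub_re, Complex.sub_im,
        Complex.add_re, Complex.add_im, Complex.neg_re, Complex.neg_im,
        Complex.conj_re, Complex.conj_im, Complex.ofReal_re, Complex.ofReal_im, Complex.I_re,
        Complex.I_im]
      ring
  · filter_upwards [Ioi_mem_nhds ht] with s hs
    have hs : 0 < s := hs
    obtain ⟨-, -, c0, c1, c2⟩ := c2_facts (hy t)
    obtain ⟨-, -, c0', c1', c2'⟩ := c2_facts (hy s)
    have bs := hbc s hs.le
    have bt := hbc t ht.le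
    rw [lin4 (-1) (-1) 1 1 (f := fun y => inner ℝ (ω s y) (deriv (deriv (ω s)) y))
      (g := fun y => inner ℝ (ω s y) (deriv (deriv (ω t)) y))
      (j := fun y => inner ℝ (ω t y) (deriv (deriv (ω s)) y))
      (l := fun y => inner ℝ (ω t y) (deriv (deriv (ω t)) y))
      (by fun_prop) (by fun_prop) (by fun_prop) (by fun_prop)]
    · rw [ibp1 (hy s) (hy s) bs.2 bs.1, ibp1 (hy s) (hy t) bs.2 bs.1,
        ibp1 (hy t) (hy s) bt.2 bt.1, ibp1 (hy t) (hy t) bt.2 bt.1, eD, eD]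
      simp only [real_inner_self_eq_norm_sq]
      have : ∀ y, inner ℝ (deriv (ω t) y) (deriv (ω s) y) = inner ℝ (deriv (ω s) y) (deriv (ω t) y) :=
        fun y => real_inner_comm _ _
      simp only [this]
      ring
    · intro y
      rw [inner_neg_right, inner_sub_left, inner_add_right, inner_add_right]
      ring
  · filter_upwards [hZ] with s hs y hy
    rw [norm_neg]
    exact (norm_add_le _ _).trans (add_le_add (hs y hy).2.2 (hZ.self_of_nhds y hy).2.2)

lemma inner_I (a b : ℂ) : inner ℝ a (Complex.I * b) = - inner ℝ b (Complex.I * a) := by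
  simp [Complex.inner]
  ring

lemma deriv_B (hν : 0 < ν) (h : IsSol ν k ω) {t : ℝ} (ht : 0 < t) :
    HasDerivAt (eB ω) (-k * eE ω t - 2 * ν * (k:ℝ)^2 * eB ω t - 2 * ν * eR ω t) t := by
  obtain ⟨N, Z, hN, hZ, hv, hz⟩ := reg hν h ht
  have hd := h.hasDerivAt ht
  obtain ⟨hc, -, hy, -, hbc⟩ := h
  have hcs : ∀ s, Continuous (ω s) := fun s => (c2_facts (hy s)).2.2.1
  have hcv : ∀ s, Continuous (deriv (ω s)) := fun s => (c2_facts (hy s)).2.2.2.1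
  have key := deriv_lemma (F := eB ω) (u := ω)
    (g := fun s y => -(Complex.I * (deriv (ω s) y + deriv (ω t) y))) (M := Z + Z)
    (G := fun y => -(Complex.I * (deriv (ω t) y + deriv (ω t) y))) ?_ hcs
    (fun s => (((hcv s).add (hcv t)).const_mul _).neg) hN ?_ hd
    (fun y hy => (((hv y hy).add tendsto_const_nhds).const_mul _).neg)
  · refine key.congr_deriv ?_
    obtain ⟨-, -, c0, c1, c2⟩ := c2_facts (hy t)
    have e2 := ibp2 (hy t) (hbc t ht.le).2 (hbc t ht.le).1
    rw [lin3 (-2 * ν) (-2 * ν * (k:ℝ)^2) (2 * k)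
      (f := fun y => inner ℝ (deriv (deriv (ω t)) y) (Complex.I * deriv (ω t) y))
      (g := fun y => inner ℝ (deriv (ω t) y) (Complex.I * ω t y))
      (j := fun y => y * inner ℝ (ω t y) (deriv (ω t) y))
      (by fun_prop) (by fun_prop) (by fun_prop)]
    · rw [e2, eE, eB, eR]
      ring
    · intro y
      rw [rhs]
      generalize (k:ℝ) = κ
      simp only [Complex.inner, ← Complex.ofReal_pow, Complex.mul_re, Complex.mul_im, Complex.sub_re, Complex.sub_im,
        Complex.add_re, Complex.add_im, Complex.neg_re, Complex.neg_im,
        Complex.conj_re, Complex.conj_im, Complex.ofReal_re, Complex.ofReal_im, Complex.I_re,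
        Complex.I_im]
      ring
  · filter_upwards [Ioi_mem_nhds ht] with s hs
    have hs : 0 < s := hs
    obtain ⟨-, -, c0, c1, c2⟩ := c2_facts (hy t)
    obtain ⟨-, -, c0', c1', c2'⟩ := c2_facts (hy s)
    have bs := hbc s hs.le
    have X := ibp4 (hy s) (hy t) bs.2 bs.1
    rw [← intervalIntegral.integral_neg] at X
    simp only [inner_I (ω s _), neg_neg] at X
    rw [lin4 1 1 (-1) (-1) (f := fun y => inner ℝ (deriv (ω s) y) (Complex.I * ω s y))
      (g := fun y => inner ℝ (deriv (ω t) y) (Complex.I * ω s y))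
      (j := fun y => inner ℝ (deriv (ω s) y) (Complex.I * ω t y))
      (l := fun y => inner ℝ (deriv (ω t) y) (Complex.I * ω t y))
      (by fun_prop) (by fun_prop) (by fun_prop) (by fun_prop)]
    · rw [X, eB, eB]
      ring
    · intro y
      rw [inner_neg_right, inner_sub_left, mul_add, inner_add_right, inner_add_right,
        inner_I (ω s y), inner_I (ω s y), inner_I (ω t y), inner_I (ω t y)]
      ring
  · filter_upwards [hZ] with s hs y hy
    rw [norm_neg, norm_mul, Complex.norm_I, one_mul]
    exact (norm_add_le _ _).trans (add_le_add (hs y hy).2.1 (hZ.self_of_nhds y hy).2.1)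

lemma quad_pos {f g : ℝ → ℂ} (hf : Continuous f) (hg : Continuous g) (c : ℝ) :
    0 ≤ (∫ y in (-1:ℝ)..1, ‖f y‖^2) + c * (∫ y in (-1:ℝ)..1, inner ℝ (f y) (Complex.I * g y))
      + c^2/4 * ∫ y in (-1:ℝ)..1, ‖g y‖^2 := by
  have e := lin3 (F := fun y => ‖f y + (c/2) • (Complex.I * g y)‖^2) 1 c (c^2/4)
    (f := fun y => ‖f y‖^2) (g := fun y => inner ℝ (f y) (Complex.I * g y))
    (j := fun y => ‖g y‖^2) (by fun_prop) (by fun_prop) (by fun_prop) (by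
      intro y
      rw [norm_add_sq_real, inner_smul_right, norm_smul, norm_mul, Complex.norm_I, mul_pow,
        Real.norm_eq_abs, sq_abs]
      ring)
  rw [one_mul] at e
  rw [← e]
  exact intervalIntegral.integral_nonneg (by norm_num) (fun y _ => by positivity)

lemma eE_nonneg (t : ℝ) : 0 ≤ eE ω t :=
  intervalIntegral.integral_nonneg (by norm_num) (fun y _ => by positivity)
lemma eD_nonneg (t : ℝ) : 0 ≤ eD ω t :=
  intervalIntegral.integral_nonneg (by norm_num) (fun y _ => by positivity)

lemma antitone_of {Φ Φ' : ℝ → ℝ} {s t : ℝ} (h : ∀ x ≥ s, HasDerivAt Φ (Φ' x) x)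
    (h' : ∀ x ≥ s, Φ' x ≤ 0) (hst : s ≤ t) : Φ t ≤ Φ s := by
  refine antitoneOn_of_deriv_nonpos (convex_Ici s)
    (fun x hx => (h x hx).continuousAt.continuousWithinAt) ?_ ?_ self_mem_Ici hst hst
  · intro x hx
    rw [interior_Ici] at hx
    exact (h x (le_of_lt hx)).differentiableAt.differentiableWithinAt
  · intro x hx
    rw [interior_Ici] at hx
    rw [(h x (le_of_lt hx)).deriv]
    exact h' x (le_of_lt hx)

lemma hypo_pos (hν : 0 < ν) (h : IsSol ν k ω) {s t : ℝ} (hs : 0 < s) (hst : s ≤ t) :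
    Real.exp (2 * ν * (k:ℝ)^2 * (t - s)) * ((1 + ν * (k:ℝ)^2 * (t - s)^3 / 12) * eE ω t)
      ≤ eE ω s := by
  set κ : ℝ := (k:ℝ) with hκ
  let Ψ : ℝ → ℝ := fun x => eE ω x + ν * (x - s) * eD ω x + ν * κ * (x - s)^2 * eB ω x
    + (1/3) * ν * κ^2 * (x - s)^3 * eE ω x
  let Φ : ℝ → ℝ := fun x => Real.exp (2 * ν * κ^2 * (x - s)) * Ψ x
  have hdΦ : ∀ x ≥ s, HasDerivAt Φ (Real.exp (2 * ν * κ^2 * (x - s)) *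
      (-ν * eD ω x - 2 * ν^2 * (x - s) *
        (eH ω x + κ * (x - s) * eR ω x + (1/3) * κ^2 * (x-s)^2 * eD ω x))) x := by
    intro x hx
    have hx0 : 0 < x := lt_of_lt_of_le hs hx
    have dE := deriv_E hν h hx0
    have dD := deriv_D hν h hx0
    have dB := deriv_B hν h hx0
    have d1 : HasDerivAt (fun x : ℝ => x - s) 1 x := (hasDerivAt_id x).sub_const s
    have dexp := (d1.const_mul (2 * ν * κ^2)).exp
    have dΨ : HasDerivAt Ψ _ x :=
      ((dE.add ((d1.const_mul ν).mul dD)).add (((d1.pow 2).const_mul (ν * κ)).mul dB)).add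
        (((d1.pow 3).const_mul ((1/3) * ν * κ^2)).mul dE)
    refine (dexp.mul dΨ).congr_deriv ?_
    simp only [Ψ, ← hκ, Pi.pow_apply]
    push_cast
    ring
  have hle := antitone_of hdΦ (fun x hx => by
    refine mul_nonpos_of_nonneg_of_nonpos (Real.exp_pos _).le ?_
    obtain ⟨-, -, c0, c1, c2⟩ := c2_facts (h.2.2.1 x)
    have q := quad_pos c2 c1 (κ * (x - s))
    have q' : 0 ≤ eH ω x + κ * (x - s) * eR ω x + (κ * (x - s))^2/4 * eD ω x := q
    have hD := eD_nonneg (ω := ω) x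
    have p1 : 0 ≤ κ^2 * (x-s)^2 * eD ω x := by positivity
    have p2 : 0 ≤ eH ω x + κ * (x - s) * eR ω x + (1/3) * κ^2 * (x-s)^2 * eD ω x := by nlinarith
    have p3 : 0 ≤ x - s := by linarith
    have p4 : 0 ≤ 2 * ν^2 * (x - s) *
        (eH ω x + κ * (x - s) * eR ω x + (1/3) * κ^2 * (x-s)^2 * eD ω x) := by positivity
    have p5 : 0 ≤ ν * eD ω x := by positivity
    linarith) hst
  have e0 : Φ s = eE ω s := by simp [Φ, Ψ]
  rw [e0] at hle
  refine le_trans ?_ hle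
  simp only [Φ]
  refine mul_le_mul_of_nonneg_left ?_ (Real.exp_pos _).le
  obtain ⟨-, -, c0, c1, c2⟩ := c2_facts (h.2.2.1 t)
  have q := quad_pos c1 c0 (κ * (t - s))
  have q' : 0 ≤ eD ω t + κ * (t - s) * eB ω t + (κ * (t - s))^2/4 * eE ω t := q
  have p : 0 ≤ ν * (t - s) * (eD ω t + κ * (t - s) * eB ω t + (κ * (t - s))^2/4 * eE ω t) :=
    mul_nonneg (mul_nonneg hν.le (by linarith)) q'
  simp only [Ψ]
  nlinarith

lemma poin_pos (hν : 0 < ν) (h : IsSol ν k ω) {s t : ℝ} (hs : 0 < s) (hst : s ≤ t) :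
    Real.exp (2 * ν * (t - s)) * eE ω t ≤ eE ω s := by
  have hdΦ : ∀ x ≥ s, HasDerivAt (fun x => Real.exp (2 * ν * (x - s)) * eE ω x)
      (Real.exp (2 * ν * (x - s)) * (2 * ν * (eE ω x - eD ω x) - 2 * ν * (k:ℝ)^2 * eE ω x)) x := by
    intro x hx
    have dE := deriv_E hν h (lt_of_lt_of_le hs hx)
    have d1 : HasDerivAt (fun x : ℝ => x - s) 1 x := (hasDerivAt_id x).sub_const s
    refine ((d1.const_mul (2 * ν)).exp.mul dE).congr_deriv ?_
    ring
  have := antitone_of hdΦ (fun x hx => by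
    refine mul_nonpos_of_nonneg_of_nonpos (Real.exp_pos _).le ?_
    have hb := h.2.2.2.2 x (hs.le.trans hx)
    have hp : eE ω x ≤ eD ω x := poincare (h.2.2.1 x) hb.2 hb.1
    have hE := eE_nonneg (ω := ω) x
    have p1 : 0 ≤ 2 * ν * (k:ℝ)^2 * eE ω x := by positivity
    nlinarith) hst
  simpa using this

lemma eE_cont (h : IsSol ν k ω) : Continuous (eE ω) := by
  apply intervalIntegral.continuous_parametric_intervalIntegral_of_continuous'
  have := h.1
  exact (this.norm.pow 2)

/-- extend an inequality from `0 < s` to `0 ≤ s` by continuity -/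
lemma extend_zero {E : ℝ → ℝ} {G : ℝ → ℝ → ℝ} (hE : Continuous E) (hG : ∀ τ, Continuous (fun x => G τ x))
    (h : ∀ s t, 0 < s → s ≤ t → G (t - s) (E t) ≤ E s) {s t : ℝ} (hs : 0 ≤ s) (hst : s ≤ t) :
    G (t - s) (E t) ≤ E s := by
  have T1 : Tendsto (fun η => G (t - s) (E (t + η))) (𝓝[>] (0:ℝ)) (𝓝 (G (t - s) (E t))) := by
    have : Continuous (fun η => G (t - s) (E (t + η))) :=
      (hG _).comp (hE.comp (by fun_prop))
    simpa using (this.tendsto 0).mono_left nhdsWithin_le_nhds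
  have T2 : Tendsto (fun η => E (s + η)) (𝓝[>] (0:ℝ)) (𝓝 (E s)) := by
    have : Continuous (fun η => E (s + η)) := hE.comp (by fun_prop)
    simpa using (this.tendsto 0).mono_left nhdsWithin_le_nhds
  refine le_of_tendsto_of_tendsto T1 T2 ?_
  filter_upwards [self_mem_nhdsWithin] with η hη
  have hη : 0 < η := hη
  have := h (s + η) (t + η) (by linarith) (by linarith)
  simpa using this

lemma hypo (hν : 0 < ν) (h : IsSol ν k ω) {s t : ℝ} (hs : 0 ≤ s) (hst : s ≤ t) :
    Real.exp (2 * ν * (k:ℝ)^2 * (t - s)) * ((1 + ν * (k:ℝ)^2 * (t - s)^3 / 12) * eE ω t)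
      ≤ eE ω s :=
  extend_zero (E := eE ω) (G := fun τ x => Real.exp (2 * ν * (k:ℝ)^2 * τ) *
    ((1 + ν * (k:ℝ)^2 * τ^3 / 12) * x)) (eE_cont h) (fun τ => by fun_prop)
    (fun s t hs hst => hypo_pos hν h hs hst) hs hst

lemma poin (hν : 0 < ν) (h : IsSol ν k ω) {s t : ℝ} (hs : 0 ≤ s) (hst : s ≤ t) :
    Real.exp (2 * ν * (t - s)) * eE ω t ≤ eE ω s :=
  extend_zero (E := eE ω) (G := fun τ x => Real.exp (2 * ν * τ) * x) (eE_cont h)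
    (fun τ => by fun_prop) (fun s t hs hst => poin_pos hν h hs hst) hs hst

end

lemma decay {ν : ℝ} {k : ℤ} {ω : ℝ → ℝ → ℂ} (hν : 0 < ν) (h : IsSol ν k ω) {μ : ℝ} (hμ : 0 < μ)
    (hμ3 : μ ^ 3 = ν * (k:ℝ)^2) {t : ℝ} (ht : 0 ≤ t) :
    eE ω t ≤ Real.exp 1 * Real.exp (-(μ / 3) * t - 2 * ν * (k:ℝ)^2 * t) * eE ω 0 := by
  set m : ℝ := 2 * ν * (k:ℝ)^2 with hm
  let A : ℝ → ℝ := fun t => Real.exp (m * t) * eE ω t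
  have hA0 : A 0 = eE ω 0 := by simp [A]
  have hmain : ∀ s t, 0 ≤ s → s ≤ t → (1 + (μ * (t - s))^3 / 12) * A t ≤ A s := by
    intro s t hs hst
    have h1 := hypo hν h hs hst
    rw [← hμ3, ← hm] at h1
    have h2 := mul_le_mul_of_nonneg_left h1 (Real.exp_pos (m * s)).le
    simp only [A]
    refine le_trans (le_of_eq ?_) h2
    have : Real.exp (m * t) = Real.exp (m * s) * Real.exp (m * (t - s)) := by
      rw [← Real.exp_add]; ring_nf
    rw [this]; ring
  have hApos : ∀ t, 0 ≤ A t := fun t => mul_nonneg (Real.exp_pos _).le (eE_nonneg t)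
  have hstep : ∀ n : ℕ, A (n * (3 / μ)) ≤ Real.exp (-n) * A 0 := by
    intro n
    induction n with
    | zero => simp
    | succ n ih =>
      have hp : 0 < 3 / μ := by positivity
      have h1 := hmain (n * (3/μ)) ((n+1) * (3/μ)) (by positivity) (by nlinarith)
      have e : μ * ((n + 1) * (3/μ) - n * (3/μ)) = 3 := by field_simp; ring
      rw [e] at h1
      have h2 : Real.exp 1 ≤ 1 + 3^3/12 := by linarith [Real.exp_one_lt_d9]
      have h3 : Real.exp 1 * A ((n+1) * (3/μ)) ≤ Real.exp (-n) * A 0 :=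
        (mul_le_mul_of_nonneg_right h2 (hApos _)).trans (h1.trans ih)
      push_cast
      have h4 : Real.exp (-(n + 1 : ℝ)) = Real.exp (-1) * Real.exp (-n) := by
        rw [← Real.exp_add]; ring_nf
      rw [h4, mul_assoc]
      have h5 := mul_le_mul_of_nonneg_left h3 (Real.exp_pos (-1)).le
      rwa [← mul_assoc, ← Real.exp_add, neg_add_cancel, Real.exp_zero, one_mul] at h5
  set n := ⌊μ * t / 3⌋₊ with hn
  have hn1 : (n:ℝ) ≤ μ * t / 3 := Nat.floor_le (by positivity)
  have hn2 : μ * t / 3 < n + 1 := Nat.lt_floor_add_one _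
  have hnt : n * (3/μ) ≤ t := by
    rw [← mul_div_assoc, div_le_iff₀ hμ]; linarith
  have h1 := hmain (n * (3/μ)) t (by positivity) hnt
  have h2 : A t ≤ A (n * (3/μ)) := by
    have : 0 ≤ (μ * (t - n * (3/μ)))^3 / 12 * A t := by
      have := hApos t
      have : 0 ≤ t - n * (3/μ) := by linarith
      positivity
    linarith
  have h3 : Real.exp (-n) ≤ Real.exp 1 * Real.exp (-(μ/3) * t) := by
    rw [← Real.exp_add]
    apply Real.exp_le_exp.2
    linarith
  have h4 : A t ≤ Real.exp 1 * Real.exp (-(μ/3) * t) * eE ω 0 := by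
    rw [← hA0]
    exact h2.trans ((hstep n).trans (mul_le_mul_of_nonneg_right h3 (hApos 0)))
  have h5 := mul_le_mul_of_nonneg_left h4 (Real.exp_pos (-(m * t))).le
  have e5 : Real.exp (-(m*t)) * A t = eE ω t := by
    simp only [A]
    rw [← mul_assoc, ← Real.exp_add, neg_add_cancel, Real.exp_zero, one_mul]
  rw [e5] at h5
  refine h5.trans (le_of_eq ?_)
  have : Real.exp (-(μ/3) * t - m * t) = Real.exp (-(m * t)) * Real.exp (-(μ/3) * t) := by
    rw [← Real.exp_add]; ring_nf
  rw [this]; ring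

lemma nL2_eq (ω : ℝ → ℝ → ℂ) (t : ℝ) : nL2 (ω t) = Real.sqrt (eE ω t) := by
  rw [nL2, eE, ← Real.sqrt_eq_rpow, intervalIntegral.integral_of_le (by norm_num),
    integral_Icc_eq_integral_Ioc]

lemma nL2_sq (ω : ℝ → ℝ → ℂ) (t : ℝ) : nL2 (ω t) ^ 2 = eE ω t := by
  rw [nL2_eq, Real.sq_sqrt (eE_nonneg t)]

lemma nL2_le {ω : ℝ → ℝ → ℂ} {t c : ℝ} (hc : 0 ≤ c) (h : eE ω t ≤ c ^ 2 * eE ω 0) :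
    nL2 (ω t) ≤ c * nL2 (ω 0) := by
  rw [nL2_eq, nL2_eq]
  refine (Real.sqrt_le_sqrt h).trans (le_of_eq ?_)
  rw [Real.sqrt_mul (sq_nonneg c), Real.sqrt_sq hc]

/-- Enhanced-dissipation semigroup bound for the linearized Navier–Stokes operator around
Couette flow with Navier-slip (zero Dirichlet vorticity) boundary conditions. -/
theorem statement11 :
    ∃ C c : ℝ, 0 < C ∧ 0 < c ∧
      ∀ (ν : ℝ) (k : ℤ) (ω : ℝ → ℝ → ℂ),
        0 < ν → ν ≤ 1 →
        Continuous (fun p : ℝ × ℝ => ω p.1 p.2) →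
        (∀ y : ℝ, ContDiff ℝ 1 (fun t => ω t y)) →
        (∀ t : ℝ, ContDiff ℝ 2 (fun y => ω t y)) →
        (∀ t > (0:ℝ), ∀ y ∈ Set.Icc (-1:ℝ) 1,
          deriv (fun s => ω s y) t
            = (ν : ℂ) * (deriv (deriv (ω t)) y - (k:ℂ)^2 * ω t y)
              - Complex.I * (k:ℂ) * (y:ℂ) * ω t y) →
        (∀ t ≥ (0:ℝ), ω t (-1) = 0 ∧ ω t 1 = 0) →
        (∀ t ≥ (0:ℝ),
          nL2 (ω t) ≤ C * Real.exp (-(c * ν ^ ((1:ℝ)/3) * |(k:ℝ)| ^ ((2:ℝ)/3) + ν) * t)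
            * nL2 (ω 0))
        ∧ (1 ≤ |k| →
            (ν * (k:ℝ)^2) ^ ((1:ℝ)/3) * ∫ t in Set.Ioi (0:ℝ), (nL2 (ω t))^2
              ≤ C * (nL2 (ω 0))^2) := by
  refine ⟨9, 1/6, by norm_num, by norm_num, ?_⟩
  intro ν k ω hν hν1 hc ht hy hpde hbc
  have h : IsSol ν k ω := ⟨hc, ht, hy, hpde, hbc⟩
  have hE0 := eE_nonneg (ω := ω) 0
  by_cases hk : k = 0
  · subst hk
    refine ⟨?_, by simp⟩
    intro t ht
    apply nL2_le (by positivity)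
    have h1 := poin hν h le_rfl ht
    rw [sub_zero] at h1
    have h2 := mul_le_mul_of_nonneg_left h1 (Real.exp_pos (-(2 * ν * t))).le
    rw [← mul_assoc, ← Real.exp_add, neg_add_cancel, Real.exp_zero, one_mul] at h2
    refine h2.trans (mul_le_mul_of_nonneg_right ?_ hE0)
    have e : (|((0:ℤ):ℝ)|) ^ ((2:ℝ)/3) = 0 := by
      simp
    rw [e, mul_zero, zero_add, mul_pow, ← Real.exp_nat_mul]
    have e2 : ((2:ℕ):ℝ) * (-ν * t) = -(2 * ν * t) := by push_cast; ring
    rw [e2]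
    nlinarith [Real.exp_pos (-(2 * ν * t))]
  · have hkR : (k:ℝ) ≠ 0 := by exact_mod_cast hk
    have hk1 : 1 ≤ (k:ℝ)^2 := by
      have : 1 ≤ k^2 := by
        have : 0 < k^2 := by positivity
        linarith
      exact_mod_cast this
    set μ : ℝ := (ν * (k:ℝ)^2) ^ ((1:ℝ)/3) with hμd
    have hμ : 0 < μ := by positivity
    have hμ3 : μ ^ 3 = ν * (k:ℝ)^2 := by
      rw [hμd, ← Real.rpow_natCast, ← Real.rpow_mul (by positivity)]
      norm_num
    have hμ' : ν ^ ((1:ℝ)/3) * |(k:ℝ)| ^ ((2:ℝ)/3) = μ := by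
      rw [hμd, Real.mul_rpow hν.le (by positivity), ← sq_abs, ← Real.rpow_natCast,
        ← Real.rpow_mul (abs_nonneg _)]
      norm_num
    have he : Real.exp 1 < 3 := by linarith [Real.exp_one_lt_d9]
    refine ⟨?_, ?_⟩
    · intro t ht
      apply nL2_le (by positivity)
      refine (decay hν h hμ hμ3 ht).trans (mul_le_mul_of_nonneg_right ?_ hE0)
      rw [mul_assoc (1/6 : ℝ), hμ', mul_pow, ← Real.exp_nat_mul]
      refine mul_le_mul (by linarith) (Real.exp_le_exp.2 ?_) (Real.exp_pos _).le (by norm_num)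
      push_cast
      have : 0 ≤ ν * t * ((k:ℝ)^2 - 1) := mul_nonneg (mul_nonneg hν.le ht) (by linarith)
      nlinarith
    · intro _
      simp only [nL2_sq]
      have hneg : -(μ/3) < 0 := by linarith
      have hI := integrableOn_exp_mul_Ioi hneg 0
      have hle : ∫ t in Set.Ioi (0:ℝ), eE ω t
          ≤ ∫ t in Set.Ioi (0:ℝ), 3 * eE ω 0 * Real.exp (-(μ/3) * t) := by
        apply integral_mono_of_nonneg
        · exact Eventually.of_forall fun t => eE_nonneg t
        · exact hI.const_mul _
        · filter_upwards [ae_restrict_mem measurableSet_Ioi] with t ht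
          have ht : 0 < t := ht
          refine (decay hν h hμ hμ3 ht.le).trans ?_
          have e1 : Real.exp (-(μ/3) * t - 2 * ν * (k:ℝ)^2 * t) ≤ Real.exp (-(μ/3) * t) := by
            apply Real.exp_le_exp.2
            have : 0 ≤ 2 * ν * (k:ℝ)^2 * t := by positivity
            linarith
          calc Real.exp 1 * Real.exp (-(μ/3) * t - 2 * ν * (k:ℝ)^2 * t) * eE ω 0
              ≤ 3 * Real.exp (-(μ/3) * t) * eE ω 0 := by gcongr
            _ = _ := by ring
      rw [integral_const_mul, integral_exp_mul_Ioi hneg] at hle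
      calc μ * ∫ t in Set.Ioi (0:ℝ), eE ω t
          ≤ μ * (3 * eE ω 0 * (-Real.exp (-(μ/3) * 0) / -(μ/3))) := by gcongr
        _ = 9 * eE ω 0 := by
          rw [mul_zero, Real.exp_zero]
          field_simp
          ring
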